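/- arXiv:2307.16128 — 8 statements merged into one kernel-verified Lean document; each statement's English description precedes it below -/
import Mathlib

section
/- Let S ⊆ ℝⁿ be a convex set, let D be a map from S to real symmetric positive definite n×n matrices satisfying the self-concordance inequality on S, and let r : ℝⁿ → ℝⁿ be differentiable on S with Fréchet derivative D(z) at each z ∈ S. Let y ∈ S, set n(y) := −D(y)⁻¹ r(y), y⁺ := y + n(y), and δ := ‖n(y)‖_{D(y)}. If δ < 1 and the segment [y, y⁺] is contained in S, then ‖D(y)⁻¹ r(y⁺)‖_{D(y)} ≤ δ² / (1 − δ). -/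
open Matrix

/-- The Hessian norm `‖z‖_H = √(zᵀ H z)` associated with a matrix `H`. -/
noncomputable def hnorm {ι : Type*} [Fintype ι] (H : Matrix ι ι ℝ) (z : ι → ℝ) : ℝ :=
  Real.sqrt (z ⬝ᵥ H.mulVec z)

/-- A matrix-valued map `D` satisfies the self-concordance inequality on `S`. -/
def SelfConcordantOn {n : ℕ} (S : Set (Fin n → ℝ))
    (D : (Fin n → ℝ) → Matrix (Fin n) (Fin n) ℝ) : Prop :=
  ∀ y₁ ∈ S, ∀ y₂ ∈ S, hnorm (D y₁) (y₂ - y₁) < 1 →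
    ∀ v : Fin n → ℝ, hnorm (D y₂) v ≤ hnorm (D y₁) v / (1 - hnorm (D y₁) (y₂ - y₁))

lemma aux_expand {n : ℕ} (A : Matrix (Fin n) (Fin n) ℝ) (hA : Aᵀ = A) (w v : Fin n → ℝ) (b a : ℝ) :
    (b • w + a • v) ⬝ᵥ A *ᵥ (b • w + a • v) =
      b ^ 2 * (w ⬝ᵥ A *ᵥ w) + 2 * (a * b) * (w ⬝ᵥ A *ᵥ v) + a ^ 2 * (v ⬝ᵥ A *ᵥ v) := by
  have h : v ⬝ᵥ A *ᵥ w = w ⬝ᵥ A *ᵥ v := by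
    rw [dotProduct_mulVec, ← mulVec_transpose, hA, dotProduct_comm]
  simp only [mulVec_add, mulVec_smul, dotProduct_add, add_dotProduct, smul_dotProduct,
    dotProduct_smul, smul_eq_mul, h]
  ring

lemma hnorm_nonneg' {n : ℕ} (H : Matrix (Fin n) (Fin n) ℝ) (v : Fin n → ℝ) : 0 ≤ hnorm H v :=
  Real.sqrt_nonneg _

lemma quad_nonneg {n : ℕ} {H : Matrix (Fin n) (Fin n) ℝ} (hH : H.PosDef) (v : Fin n → ℝ) :
    0 ≤ v ⬝ᵥ H *ᵥ v := by
  simpa using hH.posSemidef.dotProduct_mulVec_nonneg v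

lemma hnorm_sq' {n : ℕ} {H : Matrix (Fin n) (Fin n) ℝ} (hH : H.PosDef) (v : Fin n → ℝ) :
    hnorm H v ^ 2 = v ⬝ᵥ H *ᵥ v :=
  Real.sq_sqrt (quad_nonneg hH v)

lemma hnorm_zero_imp {n : ℕ} {H : Matrix (Fin n) (Fin n) ℝ} (hH : H.PosDef) (v : Fin n → ℝ)
    (h : hnorm H v = 0) : v = 0 := by
  by_contra hv
  have h1 := hH.dotProduct_mulVec_pos hv
  have h2 := hnorm_sq' hH v
  rw [h] at h2
  simp at h1
  linarith

lemma hnorm_smul' {n : ℕ} (H : Matrix (Fin n) (Fin n) ℝ) (v : Fin n → ℝ) (t : ℝ) (ht : 0 ≤ t) :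
    hnorm H (t • v) = t * hnorm H v := by
  unfold hnorm
  rw [mulVec_smul, dotProduct_smul, smul_dotProduct, smul_eq_mul, smul_eq_mul, ← mul_assoc,
    Real.sqrt_mul (mul_self_nonneg t), Real.sqrt_mul_self ht]

lemma hnorm_neg' {n : ℕ} (H : Matrix (Fin n) (Fin n) ℝ) (v : Fin n → ℝ) :
    hnorm H (-v) = hnorm H v := by
  unfold hnorm
  simp [mulVec_neg]

lemma trans_of_posDef {n : ℕ} {H : Matrix (Fin n) (Fin n) ℝ} (hH : H.PosDef) : Hᵀ = H := by
  simpa using hH.isHermitian.eq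

lemma mixed_bound {n : ℕ} {H E : Matrix (Fin n) (Fin n) ℝ} (hH : H.PosDef) (hE : E.PosDef) (c : ℝ)
    (h1 : ∀ v : Fin n → ℝ, v ⬝ᵥ E *ᵥ v ≤ (1 + c) * hnorm H v ^ 2)
    (h2 : ∀ v : Fin n → ℝ, (1 - c) * hnorm H v ^ 2 ≤ v ⬝ᵥ E *ᵥ v) (w v : Fin n → ℝ) :
    w ⬝ᵥ E *ᵥ v - w ⬝ᵥ H *ᵥ v ≤ c * (hnorm H w * hnorm H v) := by
  rcases (hnorm_nonneg' H w).eq_or_lt with h | ha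
  · have := hnorm_zero_imp hH w h.symm
    simp [this, hnorm]
  rcases (hnorm_nonneg' H v).eq_or_lt with h | hb
  · have := hnorm_zero_imp hH v h.symm
    simp [this, hnorm]
  have k1 := h1 (hnorm H v • w + hnorm H w • v)
  have k2 := h2 (hnorm H v • w + (-hnorm H w) • v)
  rw [hnorm_sq' hH, aux_expand _ (trans_of_posDef hE), aux_expand _ (trans_of_posDef hH),
    ← hnorm_sq' hH, ← hnorm_sq' hH] at k1 k2
  set a := hnorm H w
  set b := hnorm H v
  have hab : 0 < a * b := mul_pos ha hb
  refine le_of_mul_le_mul_left ?_ hab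
  nlinarith

lemma quad_bounds {n : ℕ} {S : Set (Fin n → ℝ)} {D : (Fin n → ℝ) → Matrix (Fin n) (Fin n) ℝ}
    (hPD : ∀ y ∈ S, (D y).PosDef) (hSC : SelfConcordantOn S D) {y z : Fin n → ℝ}
    (hy : y ∈ S) (hz : z ∈ S) (hs : hnorm (D y) (z - y) < 1) (v : Fin n → ℝ) :
    v ⬝ᵥ D z *ᵥ v ≤ (1 + (1 / (1 - hnorm (D y) (z - y)) ^ 2 - 1)) * hnorm (D y) v ^ 2 ∧
    (1 - (1 / (1 - hnorm (D y) (z - y)) ^ 2 - 1)) * hnorm (D y) v ^ 2 ≤ v ⬝ᵥ D z *ᵥ v := by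
  have k1 := hSC y hy z hz hs v
  have k2 := hSC y hy z hz hs (z - y)
  have k3 := hSC z hz y hy
  have e : hnorm (D z) (y - z) = hnorm (D z) (z - y) := by rw [← hnorm_neg', neg_sub]
  rw [e] at k3
  have hs0 := hnorm_nonneg' (D y) (z - y)
  have hq0 := hnorm_nonneg' (D z) (z - y)
  have ha0 := hnorm_nonneg' (D y) v
  have hb0 := hnorm_nonneg' (D z) v
  rw [← hnorm_sq' (hPD z hz)]
  set s := hnorm (D y) (z - y)
  set q := hnorm (D z) (z - y)
  set a := hnorm (D y) v
  set b := hnorm (D z) v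
  have hp : 0 < 1 - s := by linarith
  constructor
  · calc b ^ 2 ≤ (a / (1 - s)) ^ 2 := by gcongr
      _ = _ := by field_simp; ring
  · have e2 : (1 - (1 / (1 - s) ^ 2 - 1)) * a ^ 2 = (1 - 4 * s + 2 * s ^ 2) * a ^ 2 / (1 - s) ^ 2 := by
      field_simp; ring
    rw [e2, div_le_iff₀ (by positivity)]
    rcases lt_or_ge s (1 / 2) with h | h
    · have hq : q < 1 := lt_of_le_of_lt k2 (by rw [div_lt_one hp]; linarith)
      have k4 := k3 hq v
      rw [le_div_iff₀ (by linarith)] at k4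
      rw [le_div_iff₀ hp] at k2
      have k5 : a * (1 - 2 * s) ≤ b * (1 - s) := by
        have : a * (1 - q) * (1 - s) ≤ b * (1 - s) := by gcongr
        nlinarith
      have k6 : (a * (1 - 2 * s)) ^ 2 ≤ (b * (1 - s)) ^ 2 :=
        pow_le_pow_left₀ (mul_nonneg ha0 (by linarith)) k5 2
      nlinarith [mul_nonneg (sq_nonneg s) (sq_nonneg a)]
    · have : 1 - 4 * s + 2 * s ^ 2 ≤ 0 := by nlinarith
      have h3 : 0 ≤ b ^ 2 * (1 - s) ^ 2 := by positivity
      nlinarith [sq_nonneg a]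

theorem stmt_1 {n : ℕ} (S : Set (Fin n → ℝ)) (hS : Convex ℝ S)
    (D : (Fin n → ℝ) → Matrix (Fin n) (Fin n) ℝ)
    (hPD : ∀ y ∈ S, (D y).PosDef)
    (hSC : SelfConcordantOn S D)
    (r : (Fin n → ℝ) → (Fin n → ℝ))
    (hr : ∀ z ∈ S,
      HasFDerivWithinAt r ((D z).mulVecLin.toContinuousLinearMap) S z)
    (y : Fin n → ℝ) (hy : y ∈ S)
    -- `n(y) := −D(y)⁻¹ r(y)`, `y⁺ := y + n(y)`, `δ := ‖n(y)‖_{D(y)}`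
    (hδ : hnorm (D y) (-(D y)⁻¹.mulVec (r y)) < 1)
    (hseg : segment ℝ y (y + -(D y)⁻¹.mulVec (r y)) ⊆ S) :
    hnorm (D y) ((D y)⁻¹.mulVec (r (y + -(D y)⁻¹.mulVec (r y)))) ≤
      (hnorm (D y) (-(D y)⁻¹.mulVec (r y))) ^ 2 /
        (1 - hnorm (D y) (-(D y)⁻¹.mulVec (r y))) := by
  have hH := hPD y hy
  have hdet : IsUnit (D y).det := isUnit_iff_ne_zero.mpr hH.det_pos.ne'
  have hN : D y *ᵥ (-(D y)⁻¹.mulVec (r y)) = - r y := by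
    rw [mulVec_neg, mulVec_mulVec, mul_nonsing_inv _ hdet, one_mulVec]
  set N := -(D y)⁻¹.mulVec (r y)
  have hw : D y *ᵥ ((D y)⁻¹.mulVec (r (y + N))) = r (y + N) := by
    rw [mulVec_mulVec, mul_nonsing_inv _ hdet, one_mulVec]
  set w := (D y)⁻¹.mulVec (r (y + N))
  have hδ0 := hnorm_nonneg' (D y) N
  have ha0 := hnorm_nonneg' (D y) w
  have hsq := hnorm_sq' hH w
  rw [hw] at hsq
  have hmem : ∀ t ∈ Set.Icc (0 : ℝ) 1, y + t • N ∈ S := by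
    intro t ht
    apply hseg
    rw [segment_eq_image']
    exact ⟨t, ht, by simp⟩
  have hmix : ∀ t ∈ Set.Icc (0 : ℝ) 1, w ⬝ᵥ D (y + t • N) *ᵥ N - w ⬝ᵥ D y *ᵥ N ≤
      (1 / (1 - t * hnorm (D y) N) ^ 2 - 1) * (hnorm (D y) w * hnorm (D y) N) := by
    intro t ht
    have e : hnorm (D y) (y + t • N - y) = t * hnorm (D y) N := by
      rw [add_sub_cancel_left, hnorm_smul' _ _ _ ht.1]
    have hlt : hnorm (D y) (y + t • N - y) < 1 := by
      rw [e]; nlinarith [ht.1, ht.2]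
    have := quad_bounds hPD hSC hy (hmem t ht) hlt
    rw [e] at this
    exact mixed_bound hH (hPD _ (hmem t ht)) _ (fun v => (this v).1) (fun v => (this v).2) w N
  set δ := hnorm (D y) N
  set a := hnorm (D y) w
  have hder : ∀ t ∈ Set.Icc (0 : ℝ) 1, HasDerivWithinAt
      (fun t : ℝ => w ⬝ᵥ r (y + t • N) - t * (w ⬝ᵥ D y *ᵥ N) - a * (1 / (1 - t * δ) - δ * t))
      (w ⬝ᵥ D (y + t • N) *ᵥ N - w ⬝ᵥ D y *ᵥ N - a * (δ / (1 - t * δ) ^ 2 - δ))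
      (Set.Icc 0 1) t := by
    intro t ht
    have hp : 1 - t * δ ≠ 0 := by nlinarith [ht.1, ht.2]
    have d0 : HasDerivWithinAt (fun t : ℝ => y + t • N) N (Set.Icc 0 1) t := by
      simpa using (((hasDerivAt_id t).smul_const N).const_add y).hasDerivWithinAt
    have d1 : HasDerivWithinAt (fun t : ℝ => r (y + t • N)) (D (y + t • N) *ᵥ N)
        (Set.Icc 0 1) t := by
      have h := (hr _ (hmem t ht)).comp_hasDerivWithinAt t d0 hmem
      exact h
    have d2 : HasDerivWithinAt (fun t : ℝ => w ⬝ᵥ r (y + t • N)) (w ⬝ᵥ D (y + t • N) *ᵥ N)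
        (Set.Icc 0 1) t := by
      have := hasDerivWithinAt_pi.1 d1
      exact HasDerivWithinAt.fun_sum fun i _ => (this i).const_mul (w i)
    have d3 : HasDerivAt (fun t : ℝ => t * (w ⬝ᵥ D y *ᵥ N)) (w ⬝ᵥ D y *ᵥ N) t := by
      simpa using (hasDerivAt_id t).mul_const (w ⬝ᵥ D y *ᵥ N)
    have d4 : HasDerivAt (fun t : ℝ => 1 - t * δ) (-δ) t := by
      simpa using ((hasDerivAt_id t).mul_const δ).const_sub 1
    have d5 : HasDerivAt (fun t : ℝ => δ * t) δ t := by
      simpa using (hasDerivAt_id t).const_mul δ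
    have d6 : HasDerivAt (fun t : ℝ => a * (1 / (1 - t * δ) - δ * t))
        (a * (δ / (1 - t * δ) ^ 2 - δ)) t := by
      have := ((d4.fun_inv hp).sub d5).const_mul a
      simpa [one_div] using this
    exact (d2.sub d3.hasDerivWithinAt).sub d6.hasDerivWithinAt
  have hanti := antitoneOn_of_hasDerivWithinAt_nonpos (convex_Icc (0 : ℝ) 1)
    (fun t ht => (hder t ht).continuousWithinAt)
    (fun t ht => (hder t (interior_subset ht)).mono interior_subset)
    (fun t ht => by
      have := hmix t (interior_subset ht)
      have e : (1 / (1 - t * δ) ^ 2 - 1) * (a * δ) = a * (δ / (1 - t * δ) ^ 2 - δ) := by ring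
      linarith)
  have hfin := hanti (Set.left_mem_Icc.2 zero_le_one) (Set.right_mem_Icc.2 zero_le_one) zero_le_one
  simp only [one_smul, zero_smul, add_zero, hN, dotProduct_neg] at hfin
  have hp : 0 < 1 - δ := by linarith
  have e : 1 / (1 - δ) - δ - 1 = δ ^ 2 / (1 - δ) := by field_simp; ring
  have key : a ^ 2 ≤ a * (δ ^ 2 / (1 - δ)) := by
    rw [← e, hsq]
    norm_num at hfin ⊢
    linarith
  rcases ha0.eq_or_lt with h | h
  · rw [← h]; positivity
  · exact le_of_mul_le_mul_left (by linarith [sq a]) h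
end

section
/- Let S ⊆ ℝⁿ be a convex set, let D be a map from S to real symmetric positive definite n×n matrices satisfying the self-concordance inequality on S, and let r : ℝⁿ → ℝⁿ be a map. Let y ∈ S, set n(y) := −D(y)⁻¹ r(y), y⁺ := y + n(y), n(y⁺) := −D(y⁺)⁻¹ r(y⁺), and δ := ‖n(y)‖_{D(y)}. If δ < 1 and y⁺ ∈ S, then ‖n(y⁺)‖_{D(y⁺)} ≤ ‖D(y)⁻¹ r(y⁺)‖_{D(y)} / (1 − δ). -/
open Matrix

theorem scalar_aux (g h : ℝ → ℝ) (hg0 : 0 ≤ g 0) (hgn : ∀ t, 0 ≤ g t) (hhn : ∀ t, 0 ≤ h t) (hd : g 0 < 1)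
    (hg : ∀ t, 0 ≤ t → t ≤ 1 → g t ≤ g 0 / (1 - t * g 0))
    (hh : ∀ s e, 0 ≤ s → 0 ≤ e → s + e ≤ 1 → e * g (s + e) < 1 →
      h s ≤ h (s + e) / (1 - e * g (s + e))) :
    h 0 * (1 - g 0) ≤ h 1 := by
  set d := g 0 with hdd
  have key : ∀ N : ℕ, 0 < N → (1 + 1 / (N : ℝ)) * d < 1 → ∀ k : ℕ, k ≤ N →
      h 0 * (1 - ((k : ℝ) / N + 1 / N) * d) ≤ h ((k : ℝ) / N) * (1 - 1 / N * d) := by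
    intro N hN hNd k
    have hN' : (0 : ℝ) < N := by exact_mod_cast hN
    induction k with
    | zero => intro _; simp
    | succ k ih =>
      intro hk
      have ih := ih (by omega)
      have ht : ((k + 1 : ℕ) : ℝ) / N = (k : ℝ) / N + 1 / N := by push_cast; ring
      have ht1 : ((k + 1 : ℕ) : ℝ) / N ≤ 1 := by
        rw [div_le_one hN']; exact_mod_cast hk
      rw [ht] at ht1 ⊢
      have hs0 : 0 ≤ (k : ℝ) / N := by positivity
      have he0 : 0 < 1 / (N : ℝ) := by positivity
      generalize (k : ℝ) / N = s at *
      generalize 1 / (N : ℝ) = e at *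
      have hp : 0 < 1 - (s + e) * d := by nlinarith
      have hp2 : 0 < 1 - (s + e + e) * d := by nlinarith
      have hgt := hg (s + e) (by linarith) ht1
      rw [le_div_iff₀ hp] at hgt
      have hlt : e * g (s + e) < 1 := by
        have : e * g (s + e) * (1 - (s + e) * d) < 1 * (1 - (s + e) * d) := by nlinarith
        exact lt_of_mul_lt_mul_right this hp.le
      have h1 := hh s e hs0 he0.le ht1 hlt
      rw [le_div_iff₀ (by linarith)] at h1
      have h2 : h s * (1 - (s + e + e) * d) ≤ h (s + e) * (1 - (s + e) * d) := by
        have a1 := mul_le_mul_of_nonneg_right h1 hp.le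
        have a2 := mul_le_mul_of_nonneg_left hgt (mul_nonneg (hhn s) he0.le)
        nlinarith
      have he1 : 0 ≤ 1 - e * d := by nlinarith
      have b1 := mul_le_mul_of_nonneg_right ih hp2.le
      have b2 := mul_le_mul_of_nonneg_right h2 he1
      refine le_of_mul_le_mul_right ?_ hp
      linarith
  have hlim := tendsto_one_div_atTop_nhds_zero_nat (𝕜 := ℝ)
  have l1 : Filter.Tendsto (fun N : ℕ => (1 + 1 / (N : ℝ)) * d) Filter.atTop (nhds d) := by
    simpa using (hlim.const_add 1).mul_const d
  have l2 : Filter.Tendsto (fun N : ℕ => h 0 * (1 - (1 + 1 / (N : ℝ)) * d)) Filter.atTop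
      (nhds (h 0 * (1 - d))) := (l1.const_sub 1).const_mul _
  have l3 : Filter.Tendsto (fun N : ℕ => h 1 * (1 - 1 / (N : ℝ) * d)) Filter.atTop
      (nhds (h 1)) := by
    simpa using ((hlim.mul_const d).const_sub 1).const_mul (h 1)
  refine le_of_tendsto_of_tendsto l2 l3 ?_
  filter_upwards [l1.eventually (gt_mem_nhds hd), Filter.eventually_gt_atTop 0] with N h1 h2
  have := key N h2 h1 N le_rfl
  rwa [div_self (by positivity)] at this

theorem hnorm_smul_aux {n : ℕ} (H : Matrix (Fin n) (Fin n) ℝ) (c : ℝ) (z : Fin n → ℝ) :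
    hnorm H (c • z) = |c| * hnorm H z := by
  unfold hnorm
  rw [mulVec_smul, dotProduct_smul, smul_dotProduct, smul_eq_mul, smul_eq_mul, ← mul_assoc,
    Real.sqrt_mul (mul_self_nonneg c), Real.sqrt_mul_self_eq_abs]

theorem hnorm_neg_aux {n : ℕ} (H : Matrix (Fin n) (Fin n) ℝ) (z : Fin n → ℝ) :
    hnorm H (-z) = hnorm H z := by
  unfold hnorm
  rw [mulVec_neg, dotProduct_neg, neg_dotProduct, neg_neg]

theorem quad_nonneg_aux {n : ℕ} {A : Matrix (Fin n) (Fin n) ℝ} (hA : A.PosDef) (z : Fin n → ℝ) :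
    0 ≤ z ⬝ᵥ A.mulVec z := by
  simpa using hA.posSemidef.dotProduct_mulVec_nonneg z

theorem dual_aux {n : ℕ} (A B : Matrix (Fin n) (Fin n) ℝ) (hA : A.PosDef) (hB : B.PosDef)
    (c : ℝ) (hc : 0 < c) (h : ∀ v, hnorm A v * c ≤ hnorm B v) (r : Fin n → ℝ) :
    hnorm B (B⁻¹.mulVec r) ≤ hnorm A (A⁻¹.mulVec r) / c := by
  rw [le_div_iff₀ hc]
  have hAu : A.mulVec (A⁻¹.mulVec r) = r := by
    rw [mulVec_mulVec, mul_nonsing_inv _ ((isUnit_iff_isUnit_det A).1 hA.isUnit), one_mulVec]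
  have hBw : B.mulVec (B⁻¹.mulVec r) = r := by
    rw [mulVec_mulVec, mul_nonsing_inv _ ((isUnit_iff_isUnit_det B).1 hB.isUnit), one_mulVec]
  generalize A⁻¹.mulVec r = u at *
  generalize B⁻¹.mulVec r = w at *
  have hT : Aᵀ = A := by simpa using hA.isHermitian.eq
  have sq : ∀ v, c ^ 2 * (v ⬝ᵥ A.mulVec v) ≤ v ⬝ᵥ B.mulVec v := by
    intro v
    have h1 := pow_le_pow_left₀ (mul_nonneg (Real.sqrt_nonneg _) hc.le) (h v) 2
    unfold hnorm at h1
    rw [mul_pow, Real.sq_sqrt (quad_nonneg_aux hA v), Real.sq_sqrt (quad_nonneg_aux hB v)] at h1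
    linarith
  have e1 : u ⬝ᵥ A.mulVec w = w ⬝ᵥ r := by
    rw [dotProduct_mulVec, ← mulVec_transpose, hT, hAu, dotProduct_comm]
  have e2 := quad_nonneg_aux hA (c ^ 2 • w - u)
  simp only [mulVec_sub, mulVec_smul, dotProduct_sub, sub_dotProduct, smul_dotProduct,
    dotProduct_smul, smul_eq_mul, hAu, e1] at e2
  have e3 := sq w
  have e4 : c ^ 2 * (w ⬝ᵥ r) ≤ u ⬝ᵥ r := by
    rw [hBw] at e3
    have := mul_le_mul_of_nonneg_left e3 (sq_nonneg c)
    linarith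
  unfold hnorm
  rw [hAu, hBw]
  apply Real.le_sqrt_of_sq_le
  rw [mul_pow, Real.sq_sqrt (by simpa [hBw] using quad_nonneg_aux hB w)]
  linarith

theorem stmt_2 {n : ℕ} (S : Set (Fin n → ℝ)) (hS : Convex ℝ S)
    (D : (Fin n → ℝ) → Matrix (Fin n) (Fin n) ℝ)
    (hPD : ∀ y ∈ S, (D y).PosDef)
    (hSC : SelfConcordantOn S D)
    (r : (Fin n → ℝ) → (Fin n → ℝ))
    (y : Fin n → ℝ) (hy : y ∈ S)
    -- `n(y) := −D(y)⁻¹ r(y)`, `y⁺ := y + n(y)`, `δ := ‖n(y)‖_{D(y)}`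
    (hδ : hnorm (D y) (-(D y)⁻¹.mulVec (r y)) < 1)
    (hyp : y + -(D y)⁻¹.mulVec (r y) ∈ S) :
    hnorm (D (y + -(D y)⁻¹.mulVec (r y)))
        (-(D (y + -(D y)⁻¹.mulVec (r y)))⁻¹.mulVec (r (y + -(D y)⁻¹.mulVec (r y)))) ≤
      hnorm (D y) ((D y)⁻¹.mulVec (r (y + -(D y)⁻¹.mulVec (r y)))) /
        (1 - hnorm (D y) (-(D y)⁻¹.mulVec (r y))) := by
  set p := -(D y)⁻¹.mulVec (r y) with hp
  have hmem : ∀ t : ℝ, 0 ≤ t → t ≤ 1 → y + t • p ∈ S := by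
    intro t h0 h1
    have := hS.add_smul_sub_mem hy hyp ⟨h0, h1⟩
    simpa using this
  rw [hnorm_neg_aux]
  refine dual_aux _ _ (hPD _ hy) (hPD _ hyp) _ (by linarith) ?_ _
  intro v
  have := scalar_aux (fun t => hnorm (D (y + t • p)) p) (fun t => hnorm (D (y + t • p)) v)
    (Real.sqrt_nonneg _) (fun _ => Real.sqrt_nonneg _) (fun _ => Real.sqrt_nonneg _)
    (by simpa using hδ) ?_ ?_
  · simpa using this
  · intro t h0 h1
    have e : hnorm (D y) (y + t • p - y) = t * hnorm (D y) p := by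
      rw [add_sub_cancel_left, hnorm_smul_aux, abs_of_nonneg h0]
    have hn : 0 ≤ hnorm (D y) p := Real.sqrt_nonneg _
    have := hSC y hy _ (hmem t h0 h1) (by rw [e]; nlinarith) p
    rw [e] at this
    simpa using this
  · intro s e hs he hse hlt
    have e1 : hnorm (D (y + (s + e) • p)) (y + s • p - (y + (s + e) • p))
        = e * hnorm (D (y + (s + e) • p)) p := by
      have : y + s • p - (y + (s + e) • p) = (-e) • p := by module
      rw [this, hnorm_smul_aux, abs_neg, abs_of_nonneg he]
    have := hSC _ (hmem (s + e) (by linarith) hse) _ (hmem s hs (by linarith))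
      (by rw [e1]; exact hlt) v
    rw [e1] at this
    exact this
end

section
/- Let S ⊆ ℝⁿ be an open convex set, let D be a map from S to real symmetric positive definite n×n matrices satisfying the self-concordance inequality on S, and let r : ℝⁿ → ℝⁿ be differentiable on S with Fréchet derivative D(z) at each z ∈ S. Let y ∈ S with ‖−D(y)⁻¹ r(y)‖_{D(y)} ≤ 1/9, suppose the closed ball {z : ‖z − y‖_{D(y)} ≤ 1} is contained in S, and suppose there exists y* ∈ S with r(y*) = 0. Then ‖y* − y‖_{D(y)} ≤ 1/6. -/
open Matrix

theorem stmt_6 {n : ℕ} (S : Set (Fin n → ℝ)) (hS : Convex ℝ S) (hopen : IsOpen S)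
    (D : (Fin n → ℝ) → Matrix (Fin n) (Fin n) ℝ)
    (hPD : ∀ y ∈ S, (D y).PosDef)
    (hSC : SelfConcordantOn S D)
    (r : (Fin n → ℝ) → (Fin n → ℝ))
    (hr : ∀ z ∈ S,
      HasFDerivWithinAt r ((D z).mulVecLin.toContinuousLinearMap) S z)
    (y : Fin n → ℝ) (hy : y ∈ S)
    -- `n(y) := −D(y)⁻¹ r(y)`, `δ := ‖n(y)‖_{D(y)}`
    (hδ : hnorm (D y) (-(D y)⁻¹.mulVec (r y)) ≤ 1 / 9)
    (hball : {z : Fin n → ℝ | hnorm (D y) (z - y) ≤ 1} ⊆ S)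
    (ystar : Fin n → ℝ) (hystar : ystar ∈ S) (hroot : r ystar = 0) :
    hnorm (D y) (ystar - y) ≤ 1 / 6 := by
  by_contra hcon
  push Not at hcon
  set h : Fin n → ℝ := ystar - y with hh
  set ρ : ℝ := hnorm (D y) h with hρ
  have hρ0 : 0 < ρ := by linarith
  have hz : ∀ t ∈ Set.Icc (0:ℝ) 1, y + t • h ∈ S := fun t ht =>
    hS.add_smul_sub_mem hy hystar ht
  have hnn : ∀ z ∈ S, ∀ v : Fin n → ℝ, 0 ≤ v ⬝ᵥ (D z) *ᵥ v := by
    intro z hzS v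
    have := (hPD z hzS).posSemidef.dotProduct_mulVec_nonneg v
    simpa using this
  have hsq : ∀ z ∈ S, ∀ v : Fin n → ℝ, hnorm (D z) v ^ 2 = v ⬝ᵥ (D z) *ᵥ v := by
    intro z hzS v
    exact Real.sq_sqrt (hnn z hzS v)
  have hsmul : ∀ z : Fin n → ℝ, ∀ c : ℝ, hnorm (D z) (c • h) = |c| * hnorm (D z) h := by
    intro z c
    unfold hnorm
    rw [Matrix.mulVec_smul, smul_dotProduct, dotProduct_smul, smul_eq_mul, smul_eq_mul,
      ← mul_assoc, Real.sqrt_mul (mul_self_nonneg c), Real.sqrt_mul_self_eq_abs]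
  -- lower bound on the local norm along the segment
  have hlow : ∀ t ∈ Set.Icc (0:ℝ) 1, ρ / (1 + t * ρ) ≤ hnorm (D (y + t • h)) h := by
    intro t ht
    have ht0 := ht.1
    set q := hnorm (D (y + t • h)) h with hq
    have hd : hnorm (D (y + t • h)) (y - (y + t • h)) = t * q := by
      have e : y - (y + t • h) = (-t) • h := by rw [neg_smul]; abel
      rw [e, hsmul, abs_neg, abs_of_nonneg ht0]
    have hpos : 0 < 1 + t * ρ := by positivity
    rw [div_le_iff₀ hpos]
    by_cases hlt : t * q < 1
    · have := hSC _ (hz t ht) y hy (by rw [hd]; exact hlt) h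
      rw [hd, le_div_iff₀ (by linarith)] at this
      nlinarith
    · push Not at hlt
      have hq0 : 0 ≤ q := Real.sqrt_nonneg _
      nlinarith
  have hderiv : ∀ t ∈ Set.Icc (0:ℝ) 1,
      HasDerivAt (fun s : ℝ => h ⬝ᵥ r (y + s • h) + ρ / (1 + s * ρ))
        (h ⬝ᵥ (D (y + t • h)) *ᵥ h - ρ ^ 2 / (1 + t * ρ) ^ 2) t := by
    intro t ht
    have ht0 := ht.1
    have hpos : 0 < 1 + t * ρ := by positivity
    have h1 := (hr _ (hz t ht)).hasFDerivAt (hopen.mem_nhds (hz t ht))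
    have h2 : HasDerivAt (fun s : ℝ => y + s • h) h t := by
      simpa using ((hasDerivAt_id t).smul_const h).const_add y
    have h3 := h1.comp_hasDerivAt t h2
    have h4 : HasDerivAt (fun s : ℝ => h ⬝ᵥ r (y + s • h))
        (h ⬝ᵥ (D (y + t • h)) *ᵥ h) t := by
      have h5 := hasDerivAt_pi.1 h3
      have h6 := HasDerivAt.fun_sum (u := Finset.univ)
        (fun i _ => (h5 i).const_mul (h i))
      simpa [dotProduct] using h6
    have h7 : HasDerivAt (fun s : ℝ => 1 + s * ρ) ρ t := by
      simpa using ((hasDerivAt_id t).mul_const ρ).const_add 1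
    have h8 := (hasDerivAt_const t ρ).fun_div h7 hpos.ne'
    refine (h4.fun_add h8).congr_deriv ?_
    rw [zero_mul, zero_sub, neg_div, ← sub_eq_add_neg, sq ρ]
  have hmono : MonotoneOn (fun s : ℝ => h ⬝ᵥ r (y + s • h) + ρ / (1 + s * ρ))
      (Set.Icc (0:ℝ) 1) := by
    apply monotoneOn_of_deriv_nonneg (convex_Icc 0 1)
    · exact fun t ht => (hderiv t ht).continuousAt.continuousWithinAt
    · intro t ht
      exact (hderiv t (interior_subset ht)).differentiableAt.differentiableWithinAt
    · intro t ht
      have ht' := interior_subset ht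
      rw [(hderiv t ht').deriv, ← hsq _ (hz t ht'), ← div_pow]
      have ht0 := ht'.1
      have : 0 ≤ ρ / (1 + t * ρ) := by positivity
      have := pow_le_pow_left₀ this (hlow t ht') 2
      linarith
  have hm := hmono (Set.left_mem_Icc.2 zero_le_one) (Set.right_mem_Icc.2 zero_le_one) zero_le_one
  have e1 : y + h = ystar := by rw [hh]; abel
  simp only [zero_smul, add_zero, zero_mul, one_smul, one_mul, e1, hroot, dotProduct_zero,
    zero_add, div_one] at hm
  -- Cauchy-Schwarz
  set w : Fin n → ℝ := -(D y)⁻¹.mulVec (r y) with hw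
  have hDw : (D y) *ᵥ w = - r y := by
    have hu : IsUnit (D y).det := (Matrix.isUnit_iff_isUnit_det _).1 (hPD y hy).isUnit
    rw [hw, Matrix.mulVec_neg, Matrix.mulVec_mulVec, Matrix.mul_nonsing_inv _ hu,
      Matrix.one_mulVec]
  have hsymm : w ⬝ᵥ (D y) *ᵥ h = h ⬝ᵥ (D y) *ᵥ w := by
    have ht : (D y)ᵀ = D y := by simpa using (hPD y hy).isHermitian.eq
    rw [Matrix.dotProduct_mulVec, ← Matrix.mulVec_transpose, ht, dotProduct_comm]
  have hcs := hnn y hy (h - (9 * ρ) • w)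
  simp only [Matrix.mulVec_sub, Matrix.mulVec_smul, sub_dotProduct, dotProduct_sub,
    smul_dotProduct, dotProduct_smul, smul_eq_mul, hsymm, ← hsq y hy] at hcs
  rw [hDw, dotProduct_neg, ← hρ] at hcs
  have hw0 : 0 ≤ hnorm (D y) w := Real.sqrt_nonneg _
  have hw2 : hnorm (D y) w ^ 2 ≤ (1/9)^2 := pow_le_pow_left₀ hw0 hδ 2
  have hb : -(h ⬝ᵥ r y) ≤ ρ / 9 := by
    have h1 : ρ * (81 * ρ * hnorm (D y) w ^ 2) ≤ ρ * ρ := by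
      have : 81 * ρ * hnorm (D y) w ^ 2 ≤ ρ := by nlinarith
      exact mul_le_mul_of_nonneg_left this hρ0.le
    have h2 : 0 ≤ ρ * (2 * ρ + 18 * (h ⬝ᵥ r y)) := by nlinarith
    have := nonneg_of_mul_nonneg_right h2 hρ0
    linarith
  have hf : ρ * (8 / 9) ≤ ρ / (1 + ρ) := by linarith
  rw [le_div_iff₀ (by linarith)] at hf
  nlinarith
end

section
/- (Robustness of the Newton decrement to a change of the equality-constraint right-hand side) Let M be a real symmetric positive definite n×n matrix with operator norm ‖M⁻¹‖ ≤ 1/m for some m > 0, and let r, Δr ∈ ℝⁿ satisfy rᵀ M⁻¹ r ≤ 1/81 and ‖Δr‖ ≤ √(3m/160) (Euclidean norm). Then (r + Δr)ᵀ M⁻¹ (r + Δr) ≤ 1/16; in particular, the Newton decrement ‖M⁻¹(r + Δr)‖_M is at most 1/4. -/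
open Matrix

/-- The Euclidean norm of a vector. -/
noncomputable def euclNorm {ι : Type*} [Fintype ι] (z : ι → ℝ) : ℝ :=
  Real.sqrt (z ⬝ᵥ z)

/-- Robustness of the Newton decrement to a change of the equality-constraint
right-hand side. -/
theorem stmt_8 {n : ℕ} (M : Matrix (Fin n) (Fin n) ℝ) (hM : M.PosDef)
    (m : ℝ) (hm : 0 < m)
    -- operator-norm bound `‖M⁻¹‖ ≤ 1/m`
    (hop : ∀ v : Fin n → ℝ, euclNorm (M⁻¹.mulVec v) ≤ (1 / m) * euclNorm v)
    (r Δr : Fin n → ℝ)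
    (hr : r ⬝ᵥ M⁻¹.mulVec r ≤ 1 / 81)
    (hΔr : euclNorm Δr ≤ Real.sqrt (3 * m / 160)) :
    (r + Δr) ⬝ᵥ M⁻¹.mulVec (r + Δr) ≤ 1 / 16 ∧
      hnorm M (M⁻¹.mulVec (r + Δr)) ≤ 1 / 4 := by
  have hP : M⁻¹.PosDef := hM.inv
  have hsymm : ∀ u v : Fin n → ℝ, u ⬝ᵥ M⁻¹.mulVec v = v ⬝ᵥ M⁻¹.mulVec u := by
    intro u v
    have hT : (M⁻¹)ᵀ = M⁻¹ := by
      have h := hP.isHermitian.eq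
      rwa [Matrix.conjTranspose_eq_transpose_of_trivial] at h
    rw [Matrix.dotProduct_mulVec, ← Matrix.mulVec_transpose, hT, dotProduct_comm]
  have hnn : ∀ v : Fin n → ℝ, 0 ≤ v ⬝ᵥ v := fun v =>
    Finset.sum_nonneg fun i _ => mul_self_nonneg (v i)
  have hdd : Δr ⬝ᵥ Δr ≤ 3 * m / 160 := by
    unfold euclNorm at hΔr
    exact (Real.sqrt_le_sqrt_iff (by positivity)).1 hΔr
  have hww : M⁻¹.mulVec Δr ⬝ᵥ M⁻¹.mulVec Δr ≤ (1 / m) ^ 2 * (Δr ⬝ᵥ Δr) := by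
    have h := hop Δr
    unfold euclNorm at h
    have h2 := pow_le_pow_left₀ (Real.sqrt_nonneg _) h 2
    rwa [mul_pow, Real.sq_sqrt (hnn _), Real.sq_sqrt (hnn _)] at h2
  have hc : Δr ⬝ᵥ M⁻¹.mulVec Δr ≤ 3 / 160 := by
    have h := hnn (Δr - m • M⁻¹.mulVec Δr)
    simp only [sub_dotProduct, dotProduct_sub, smul_dotProduct, dotProduct_smul,
      smul_eq_mul] at h
    rw [dotProduct_comm (M⁻¹.mulVec Δr) Δr] at h
    have h3 : m * (m * (M⁻¹.mulVec Δr ⬝ᵥ M⁻¹.mulVec Δr)) ≤ Δr ⬝ᵥ Δr := by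
      calc _ ≤ m * (m * ((1 / m) ^ 2 * (Δr ⬝ᵥ Δr))) := by gcongr
        _ = _ := by field_simp
    have h4 : m * (Δr ⬝ᵥ M⁻¹.mulVec Δr) ≤ m * (3 / 160) := by linarith
    exact le_of_mul_le_mul_left h4 hm
  have hmain : (r + Δr) ⬝ᵥ M⁻¹.mulVec (r + Δr) ≤ 1 / 16 := by
    have h : 0 ≤ ((5 / 4 : ℝ) • r - Δr) ⬝ᵥ M⁻¹.mulVec ((5 / 4 : ℝ) • r - Δr) := by
      simpa using hP.posSemidef.dotProduct_mulVec_nonneg ((5 / 4 : ℝ) • r - Δr)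
    simp only [Matrix.mulVec_sub, Matrix.mulVec_smul, sub_dotProduct, dotProduct_sub,
      smul_dotProduct, dotProduct_smul, smul_eq_mul] at h
    simp only [Matrix.mulVec_add, add_dotProduct, dotProduct_add]
    rw [hsymm Δr r] at h ⊢
    linarith
  refine ⟨hmain, ?_⟩
  unfold hnorm
  have hu : IsUnit M.det := (Matrix.isUnit_iff_isUnit_det M).1 hM.isUnit
  rw [Matrix.mulVec_mulVec, Matrix.mul_nonsing_inv M hu, Matrix.one_mulVec, dotProduct_comm]
  rw [Real.sqrt_le_left (by norm_num)]
  linarith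
end

section
/- (Bound on the barrier direction through the KKT matrix) Let H be a real symmetric positive definite N×N matrix, A a real P×N matrix of full row rank with P < N, and D := [[H, Aᵀ], [A, 0]] the associated (N+P)×(N+P) KKT matrix, which is invertible. Let g ∈ ℝᴺ satisfy gᵀ H⁻¹ g ≤ v for some v ≥ 0, let ν ∈ ℝᴾ, and set w := (g + Aᵀν, 0) ∈ ℝ^{N+P}. Then 0 ≤ wᵀ D⁻¹ w ≤ v. -/
open Matrix

/-- Bound on the barrier direction through the KKT matrix. -/
theorem stmt_9 {N P : ℕ} (hPN : P < N)
    (H : Matrix (Fin N) (Fin N) ℝ) (hH : H.PosDef)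
    (A : Matrix (Fin P) (Fin N) ℝ) (hA : A.rank = P)
    (v : ℝ) (hv : 0 ≤ v)
    (g : Fin N → ℝ) (hg : g ⬝ᵥ H⁻¹.mulVec g ≤ v)
    (ν : Fin P → ℝ) :
    -- KKT matrix `D = [[H, Aᵀ], [A, 0]]` and `w = (g + Aᵀν, 0)`
    0 ≤ Sum.elim (g + Aᵀ.mulVec ν) (0 : Fin P → ℝ) ⬝ᵥ
          (Matrix.fromBlocks H Aᵀ A 0)⁻¹.mulVec
            (Sum.elim (g + Aᵀ.mulVec ν) (0 : Fin P → ℝ)) ∧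
      Sum.elim (g + Aᵀ.mulVec ν) (0 : Fin P → ℝ) ⬝ᵥ
          (Matrix.fromBlocks H Aᵀ A 0)⁻¹.mulVec
            (Sum.elim (g + Aᵀ.mulVec ν) (0 : Fin P → ℝ)) ≤ v := by
  by_cases hD : IsUnit (Matrix.fromBlocks H Aᵀ A 0).det
  swap
  · rw [Matrix.nonsing_inv_apply_not_isUnit _ hD]
    simpa using hv
  set w : Fin N ⊕ Fin P → ℝ := Sum.elim (g + Aᵀ.mulVec ν) (0 : Fin P → ℝ) with hw
  obtain ⟨x, y, hz⟩ : ∃ (x : Fin N → ℝ) (y : Fin P → ℝ),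
      (Matrix.fromBlocks H Aᵀ A 0)⁻¹.mulVec w = Sum.elim x y :=
    ⟨_, _, (Sum.elim_comp_inl_inr _).symm⟩
  have hDz : (Matrix.fromBlocks H Aᵀ A 0).mulVec (Sum.elim x y) = w := by
    rw [← hz, Matrix.mulVec_mulVec, Matrix.mul_nonsing_inv _ hD, Matrix.one_mulVec]
  rw [Matrix.fromBlocks_mulVec, hw] at hDz
  have h1 : H.mulVec x + Aᵀ.mulVec y = g + Aᵀ.mulVec ν := by
    funext i
    simpa using congrFun hDz (Sum.inl i)
  have h2 : A.mulVec x = 0 := by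
    funext i
    simpa using congrFun hDz (Sum.inr i)
  have hAt : ∀ u : Fin P → ℝ, x ⬝ᵥ Aᵀ.mulVec u = 0 := by
    intro u
    rw [Matrix.dotProduct_mulVec, Matrix.vecMul_transpose, h2, zero_dotProduct]
  have hq : x ⬝ᵥ H.mulVec x = x ⬝ᵥ g := by
    have := congrArg (fun t => x ⬝ᵥ t) h1
    simpa [dotProduct_add, hAt] using this
  have hval : w ⬝ᵥ Sum.elim x y = x ⬝ᵥ g := by
    rw [hw, sumElim_dotProduct_sumElim, zero_dotProduct, add_zero, dotProduct_comm,
      dotProduct_add, hAt, add_zero]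
  have hnn : ∀ t : Fin N → ℝ, 0 ≤ t ⬝ᵥ H.mulVec t := by
    intro t
    simpa using hH.posSemidef.dotProduct_mulVec_nonneg t
  have hHt : Hᵀ = H := by simpa using hH.isHermitian.eq
  have hHg : H.mulVec (H⁻¹.mulVec g) = g := by
    rw [Matrix.mulVec_mulVec,
      Matrix.mul_nonsing_inv _ ((Matrix.isUnit_iff_isUnit_det _).1 hH.isUnit), Matrix.one_mulVec]
  have hc : (H⁻¹.mulVec g) ⬝ᵥ H.mulVec x = x ⬝ᵥ g := by
    rw [Matrix.dotProduct_mulVec, ← Matrix.mulVec_transpose, hHt, hHg, dotProduct_comm]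
  have key := hnn (x - H⁻¹.mulVec g)
  rw [Matrix.mulVec_sub, hHg, sub_dotProduct, dotProduct_sub, dotProduct_sub, hc, hq,
    dotProduct_comm (H⁻¹.mulVec g) g] at key
  rw [hz, hval]
  refine ⟨hq ▸ hnn x, by linarith⟩
end

section
/- (Safe barrier-parameter increase) Let V be a real normed vector space, let v ≥ 1, and let β be a real number with 1 < β ≤ 1 + 1/(8√v). If n, h ∈ V satisfy ‖n‖ ≤ 1/9 and ‖h‖ ≤ √v, then ‖β n + (β − 1) h‖ ≤ 1/4. -/
/-- Safe barrier-parameter increase. -/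
theorem stmt_11 (V : Type*) [NormedAddCommGroup V] [NormedSpace ℝ V]
    (v : ℝ) (hv : 1 ≤ v)
    (β : ℝ) (hβ₁ : 1 < β) (hβ₂ : β ≤ 1 + 1 / (8 * Real.sqrt v))
    (n h : V) (hn : ‖n‖ ≤ 1 / 9) (hh : ‖h‖ ≤ Real.sqrt v) :
    ‖β • n + (β - 1) • h‖ ≤ 1 / 4 := by
  have hs : 1 ≤ Real.sqrt v := Real.one_le_sqrt.mpr hv
  have hs0 : 0 < Real.sqrt v := by linarith
  have h1 : (β - 1) * Real.sqrt v ≤ 1 / 8 := by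
    have h2 : β - 1 ≤ 1 / (8 * Real.sqrt v) := by linarith
    calc (β - 1) * Real.sqrt v ≤ 1 / (8 * Real.sqrt v) * Real.sqrt v :=
          mul_le_mul_of_nonneg_right h2 hs0.le
      _ = 1 / 8 := by field_simp
  have h3 : β ≤ 9 / 8 := by nlinarith
  have h4 : β * ‖n‖ ≤ 9 / 8 * (1 / 9) :=
    mul_le_mul h3 hn (norm_nonneg n) (by norm_num)
  have h5 : (β - 1) * ‖h‖ ≤ (β - 1) * Real.sqrt v :=
    mul_le_mul_of_nonneg_left hh (by linarith)
  have h6 := norm_add_le (β • n) ((β - 1) • h)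
  rw [norm_smul, norm_smul, Real.norm_of_nonneg (by linarith : (0 : ℝ) ≤ β),
    Real.norm_of_nonneg (by linarith : (0 : ℝ) ≤ β - 1)] at h6
  linarith
end

section
/- (Dynamic regret bound of OIPM-TEC) Let N ∈ ℕ, c ∈ ℝᴺ, v > 0, η₀ > 0, β > 1, and set η_t := η₀ βᵗ for t ≥ 1. Let (x_t)_{t=1}^{T}, (x^{η_t}_{t−1})_{t=1}^{T}, and (x*_t)_{t=0}^{T} be sequences in ℝᴺ such that for every t = 1, …, T: (i) cᵀ(x_t − x^{η_t}_{t−1}) ≤ (6/5)·(v/η_t) (tracking error of the Newton iterate to the barrier-path point), and (ii) cᵀ(x^{η_t}_{t−1} − x*_{t−1}) ≤ v/η_t (optimality gap of the barrier-path point). Then the dynamic regret satisfies Σ_{t=1}^{T} cᵀ(x_t − x*_t) ≤ ‖c‖ · Σ_{t=1}^{T} ‖x*_{t−1} − x*_t‖ + 11 v β / (5 η₀ (β − 1)), where ‖·‖ is the Euclidean norm. -/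
open Matrix

theorem euclNorm_cs {N : ℕ} (a b : Fin N → ℝ) : a ⬝ᵥ b ≤ euclNorm a * euclNorm b := by
  have h := Real.sum_mul_le_sqrt_mul_sqrt Finset.univ a b
  simpa [euclNorm, dotProduct, pow_two] using h

theorem geom_aux (v η₀ β : ℝ) (hη₀ : 0 < η₀) (hβ : 1 < β) (T : ℕ) :
    ∑ t ∈ Finset.Icc 1 T, v / (η₀ * β ^ t) =
      v / (η₀ * (β - 1)) - v / (η₀ * (β - 1) * β ^ T) := by
  have h1 : β - 1 ≠ 0 := by linarith
  have h0 : β ≠ 0 := by linarith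
  induction T with
  | zero => simp
  | succ n ih =>
    rw [Finset.sum_Icc_succ_top (by omega), ih]
    field_simp
    ring

/-- Dynamic regret bound of OIPM-TEC. -/
theorem stmt_16 {N : ℕ} (T : ℕ)
    (c : Fin N → ℝ) (v η₀ β : ℝ) (hv : 0 < v) (hη₀ : 0 < η₀) (hβ : 1 < β)
    -- `x t` is the iterate, `p t` is the barrier-path point `x^{η_t}_{t-1}`,
    -- `xs t` is the round-optimal point `x*_t`, and `η_t = η₀ βᵗ`
    (x p : ℕ → Fin N → ℝ) (xs : ℕ → Fin N → ℝ)
    (htrack : ∀ t ∈ Finset.Icc 1 T,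
      c ⬝ᵥ (x t - p t) ≤ (6 / 5) * (v / (η₀ * β ^ t)))
    (hgap : ∀ t ∈ Finset.Icc 1 T,
      c ⬝ᵥ (p t - xs (t - 1)) ≤ v / (η₀ * β ^ t)) :
    (∑ t ∈ Finset.Icc 1 T, c ⬝ᵥ (x t - xs t)) ≤
      euclNorm c * (∑ t ∈ Finset.Icc 1 T, euclNorm (xs (t - 1) - xs t)) +
        11 * v * β / (5 * η₀ * (β - 1)) := by
  have hstep : ∀ t ∈ Finset.Icc 1 T, c ⬝ᵥ (x t - xs t) ≤
      euclNorm c * euclNorm (xs (t - 1) - xs t) + (11 / 5) * (v / (η₀ * β ^ t)) := by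
    intro t ht
    have h1 := htrack t ht
    have h2 := hgap t ht
    have h3 := euclNorm_cs c (xs (t - 1) - xs t)
    have h4 : c ⬝ᵥ (x t - xs t) = c ⬝ᵥ (x t - p t) + c ⬝ᵥ (p t - xs (t - 1))
        + c ⬝ᵥ (xs (t - 1) - xs t) := by
      simp only [dotProduct_sub]; ring
    linarith
  have hs := Finset.sum_le_sum hstep
  rw [Finset.sum_add_distrib, ← Finset.mul_sum, ← Finset.mul_sum,
    geom_aux v η₀ β hη₀ hβ T] at hs
  have hb : 0 < β - 1 := by linarith
  have hβ0 : 0 < β := by linarith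
  have hpos : 0 ≤ v / (η₀ * (β - 1) * β ^ T) := by positivity
  have hA : 0 < v / (η₀ * (β - 1)) := by positivity
  have he : 11 * v * β / (5 * η₀ * (β - 1)) = (11 / 5) * (v / (η₀ * (β - 1))) * β := by
    field_simp
  rw [he]
  nlinarith
end

section
/- (Epsilon-regret bound of εOIPM-TEC) Let N ∈ ℕ, c ∈ ℝᴺ, v > 0, η > 0 and ε > 0 with η ≥ 11 v / (5 ε). Let (x_t)_{t=1}^{T} and (x*_t)_{t=0}^{T} be sequences in ℝᴺ such that cᵀ(x_t − x*_{t−1}) ≤ 11 v / (5 η) for every t = 1, …, T. Then the epsilon-regret satisfies Σ_{t=1}^{T} max(cᵀ(x_t − x*_t) − ε, 0) ≤ ‖c‖ · Σ_{t=1}^{T} ‖x*_{t−1} − x*_t‖, where ‖·‖ is the Euclidean norm. -/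
open Matrix

/-- Epsilon-regret bound of εOIPM-TEC. -/
theorem stmt_17 {N : ℕ} (T : ℕ)
    (c : Fin N → ℝ) (v η ε : ℝ) (hv : 0 < v) (hη : 0 < η) (hε : 0 < ε)
    (hηε : η ≥ 11 * v / (5 * ε))
    (x : ℕ → Fin N → ℝ) (xs : ℕ → Fin N → ℝ)
    (htrack : ∀ t ∈ Finset.Icc 1 T,
      c ⬝ᵥ (x t - xs (t - 1)) ≤ 11 * v / (5 * η)) :
    (∑ t ∈ Finset.Icc 1 T, max (c ⬝ᵥ (x t - xs t) - ε) 0) ≤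
      euclNorm c * (∑ t ∈ Finset.Icc 1 T, euclNorm (xs (t - 1) - xs t)) := by
  have hcs : ∀ z : Fin N → ℝ, c ⬝ᵥ z ≤ euclNorm c * euclNorm z := by
    intro z
    have h := Real.sum_mul_le_sqrt_mul_sqrt Finset.univ c z
    simpa only [euclNorm, dotProduct, pow_two] using h
  have hb : 11 * v / (5 * η) ≤ ε := by
    rw [ge_iff_le, div_le_iff₀ (by positivity)] at hηε
    rw [div_le_iff₀ (by positivity)]
    linarith
  rw [Finset.mul_sum]
  apply Finset.sum_le_sum
  intro t ht
  have h1 := htrack t ht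
  have h2 := hcs (xs (t - 1) - xs t)
  have h3 : c ⬝ᵥ (x t - xs t) = c ⬝ᵥ (x t - xs (t - 1)) + c ⬝ᵥ (xs (t - 1) - xs t) := by
    rw [← dotProduct_add, sub_add_sub_cancel]
  apply max_le
  · linarith
  · exact mul_nonneg (Real.sqrt_nonneg _) (Real.sqrt_nonneg _)
end
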